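/- Let E be an ordered Polish space, let μₙ, n ∈ ℕ, be Borel probability measures on E converging weakly to a probability measure π̃, and let π be a Borel probability measure such that limₙ μₙ(I) = π(I) for every Borel increasing set I ⊆ E. Then π̃ = π. -/

import Mathlib

open MeasureTheory ProbabilityTheory Filter Topology

/-- `μ` is *stochastically smaller* than `ν` (written `μ ⪯ ν` in the paper):
`μ I ≤ ν I` for every Borel increasing (upper) set `I`. -/
def StochDom {E : Type*} [MeasurableSpace E] [Preorder E] (μ ν : Measure E) : Prop :=
  ∀ I : Set E, MeasurableSet I → IsUpperSet I → μ I ≤ ν I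

/-- A Markov kernel `P` is *(stochastically) monotone* if for every bounded monotone
measurable `g : E → [0,1]` the map `x ↦ ∫ g dP(x)` is again monotone. -/
def MonotoneKernel {E : Type*} [MeasurableSpace E] [Preorder E] (P : Kernel E E) : Prop :=
  ∀ g : E → ℝ, Measurable g → Monotone g → (∀ x, g x ∈ Set.Icc (0 : ℝ) 1) →
    Monotone fun x => ∫ y, g y ∂(P x)

/-- The `n`-step transition kernel `P⁽ⁿ⁾` of a Markov kernel `P`;
`kpow P n x` is the law of `Xₙˣ`, the chain with kernel `P` started at `x`. -/
noncomputable def kpow {E : Type*} [MeasurableSpace E] (P : Kernel E E) : ℕ → Kernel E E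
  | 0 => Kernel.id
  | n + 1 => P.comp (kpow P n)

/-- The process `Z` on `(Ω, μ)` is a (possibly time-inhomogeneous) Markov chain with
one-step kernels `Q n`, expressed through finite-dimensional distributions: for every
bounded measurable cylinder functional `φ` of the past and every Borel set `A`,
`E[φ(Z₀,…,Zₙ) · 1_A(Z_{n+1})] = E[φ(Z₀,…,Zₙ) · (Q n)(Zₙ, A)]`. -/
def MCStep {Ω S : Type*} [MeasurableSpace Ω] [MeasurableSpace S]
    (μ : Measure Ω) (Q : ℕ → Kernel S S) (Z : ℕ → Ω → S) : Prop :=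
  ∀ (n : ℕ) (A : Set S), MeasurableSet A →
    ∀ φ : (Fin (n + 1) → S) → ℝ, Measurable φ → (∀ v, φ v ∈ Set.Icc (0 : ℝ) 1) →
      ∫ ω, φ (fun i => Z i.1 ω) * A.indicator (fun _ => (1 : ℝ)) (Z (n + 1) ω) ∂μ
        = ∫ ω, φ (fun i => Z i.1 ω) * ((Q n) (Z n ω) A).toReal ∂μ

/-- `X` on `(Ω, μ)` is a time-homogeneous Markov chain with kernel `P` started at `x`. -/
def IsMChain {E Ω : Type*} [MeasurableSpace E] [MeasurableSpace Ω]
    (P : Kernel E E) (x : E) (μ : Measure Ω) (X : ℕ → Ω → E) : Prop :=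
  IsProbabilityMeasure μ ∧ (∀ n, Measurable (X n)) ∧ (∀ᵐ ω ∂μ, X 0 ω = x) ∧
    MCStep μ (fun _ => P) X

/-- A *Markovian coupling* of two chains with kernel `P` started at `x` and `y`:
both coordinates are Markov chains with kernel `P` and the pair process is itself a
(possibly time-inhomogeneous) Markov chain. -/
def IsMarkovianCoupling {E Ω : Type*} [MeasurableSpace E] [MeasurableSpace Ω]
    (P : Kernel E E) (x y : E) (μ : Measure Ω) (X Y : ℕ → Ω → E) : Prop :=
  IsMChain P x μ X ∧ IsMChain P y μ Y ∧
    ∃ Q : ℕ → Kernel (E × E) (E × E), (∀ n, IsMarkovKernel (Q n)) ∧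
      MCStep μ Q fun n ω => (X n ω, Y n ω)

/-- A set `H ⊆ E × E` is *achievable* for the kernel `P` if for all `x, y` there is a
Markovian coupling of the chains started at `x` and `y` whose hitting time of `H`
is finite almost surely. -/
def Achievable {E : Type*} [MeasurableSpace E] (P : Kernel E E) (H : Set (E × E)) : Prop :=
  ∀ x y : E, ∃ (Ω : Type) (_ : MeasurableSpace Ω) (μ : Measure Ω) (X Y : ℕ → Ω → E),
    IsMarkovianCoupling P x y μ X Y ∧ ∀ᵐ ω ∂μ, ∃ n, (X n ω, Y n ω) ∈ H

/-- Condition (BMC): every increasing sequence bounded above by some element converges. -/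
def BMC (E : Type*) [Preorder E] [TopologicalSpace E] : Prop :=
  ∀ (x : ℕ → E) (y : E), Monotone x → (∀ n, x n ≤ y) → ∃ l, Tendsto x atTop (nhds l)

/-- The ordered metric space `E` is *normal*: there is a continuous `h : [0,∞) → [0,∞)`
with `h 0 = 0` such that `x ⪯ y ⪯ z` implies `d(x,y) ≤ h (d(x,z))`. -/
def NormalOrdered (E : Type*) [PseudoMetricSpace E] [Preorder E] : Prop :=
  ∃ h : ℝ → ℝ, ContinuousOn h (Set.Ici 0) ∧ h 0 = 0 ∧ (∀ t ≥ (0 : ℝ), 0 ≤ h t) ∧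
    ∀ x y z : E, x ≤ y → y ≤ z → dist x y ≤ h (dist x z)

/-- Condition (PR): there are `x₀ ⪯ y₀` such that the hitting times
`ν⁻ = min {n ≥ 1 : Xₙ^{x₀} ⪰ x₀}` and `ν⁺ = min {n ≥ 1 : Xₙ^{y₀} ⪯ y₀}`
have finite expectations. -/
def PRCond {E : Type*} [MeasurableSpace E] [Preorder E] (P : Kernel E E) : Prop :=
  ∃ x₀ y₀ : E, x₀ ≤ y₀ ∧
    (∃ (Ω : Type) (_ : MeasurableSpace Ω) (μ : Measure Ω) (X : ℕ → Ω → E),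
      IsMChain P x₀ μ X ∧ (∀ᵐ ω ∂μ, ∃ n, 1 ≤ n ∧ x₀ ≤ X n ω) ∧
      Integrable (fun ω => ((sInf {n : ℕ | 1 ≤ n ∧ x₀ ≤ X n ω} : ℕ) : ℝ)) μ) ∧
    (∃ (Ω : Type) (_ : MeasurableSpace Ω) (μ : Measure Ω) (X : ℕ → Ω → E),
      IsMChain P y₀ μ X ∧ (∀ᵐ ω ∂μ, ∃ n, 1 ≤ n ∧ X n ω ≤ y₀) ∧
      Integrable (fun ω => ((sInf {n : ℕ | 1 ≤ n ∧ X n ω ≤ y₀} : ℕ) : ℝ)) μ)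

/-!
On closed increasing sets the portmanteau theorem gives `π F ≤ πt F`. Filling an open increasing set
with compact sets, whose increasing hulls are closed, transfers this inequality to open increasing
sets. There the portmanteau theorem gives the reverse inequality, so `πt` and `π` agree on the
π-system of open increasing sets. Since the order is closed and antisymmetric, the σ-algebra
generated by this π-system separates disjoint compact sets, and inner regularity then forces two
finite measures agreeing on it to be equal.
-/

section UpperLowerClosure

variable {E : Type*} [TopologicalSpace E] [Preorder E] [OrderClosedTopology E]

theorem isClosed_lowerClosure_of_isCompact {K : Set E} (hK : IsCompact K) :
    IsClosed (lowerClosure K : Set E) := by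
  rw [← isOpen_compl_iff, isOpen_iff_eventually]
  intro x hx
  have hxK : ∀ y ∈ K, ∀ᶠ z : E × E in 𝓝 (x, y), ¬z.1 ≤ z.2 := fun y hy =>
    OrderClosedTopology.isClosed_le'.isOpen_compl.eventually_mem fun hxy => hx ⟨y, hy, hxy⟩
  filter_upwards [hK.eventually_forall_of_forall_eventually (P := fun a y => ¬a ≤ y) hxK] with a ha
  exact fun ⟨y, hy, hay⟩ => ha y hy hay

theorem isClosed_upperClosure_of_isCompact {K : Set E} (hK : IsCompact K) :
    IsClosed (upperClosure K : Set E) :=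
  isClosed_lowerClosure_of_isCompact (E := Eᵒᵈ) hK

end UpperLowerClosure

theorem exists_measurableSet_separating_of_isCompact {X : Type*} [TopologicalSpace X]
    [MeasurableSpace X] {C D : Set X} (hC : IsCompact C) (hD : IsCompact D)
    (h : ∀ x ∈ C, ∀ y ∈ D, ∃ T, MeasurableSet T ∧ T ∈ 𝓝[C] x ∧ Tᶜ ∈ 𝓝[D] y) :
    ∃ T, MeasurableSet T ∧ C ⊆ T ∧ Disjoint T D := by
  have separate_point : ∀ x ∈ C, ∃ T, MeasurableSet T ∧ T ∈ 𝓝[C] x ∧ Disjoint T D := by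
    intro x hx
    refine hD.induction_on (p := fun s => ∃ T, MeasurableSet T ∧ T ∈ 𝓝[C] x ∧ Disjoint T s)
      ⟨Set.univ, .univ, univ_mem, Set.disjoint_empty _⟩ ?_ ?_ ?_
    · rintro s t hst ⟨T, hT, hTx, hTt⟩
      exact ⟨T, hT, hTx, hTt.mono_right hst⟩
    · rintro s t ⟨T, hT, hTx, hTs⟩ ⟨T', hT', hTx', hTt⟩
      exact ⟨T ∩ T', hT.inter hT', inter_mem hTx hTx', Set.disjoint_union_right.2
        ⟨hTs.mono_left Set.inter_subset_left, hTt.mono_left Set.inter_subset_right⟩⟩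
    · intro y hy
      obtain ⟨T, hT, hTx, hTy⟩ := h x hx y hy
      exact ⟨Tᶜ, hTy, T, hT, hTx, disjoint_compl_right⟩
  refine hC.induction_on (p := fun s => ∃ T, MeasurableSet T ∧ s ⊆ T ∧ Disjoint T D)
    ⟨∅, .empty, Set.Subset.rfl, Set.empty_disjoint _⟩ ?_ ?_ ?_
  · rintro s t hst ⟨T, hT, htT, hTD⟩
    exact ⟨T, hT, hst.trans htT, hTD⟩
  · rintro s t ⟨T, hT, hsT, hTD⟩ ⟨T', hT', htT', hTD'⟩
    exact ⟨T ∪ T', hT.union hT', Set.union_subset_union hsT htT',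
      Set.disjoint_union_left.2 ⟨hTD, hTD'⟩⟩
  · intro x hx
    obtain ⟨T, hT, hTx, hTD⟩ := separate_point x hx
    exact ⟨T, hTx, T, hT, Set.Subset.rfl, hTD⟩

theorem exists_isCompact_mem_nhdsWithin_subset {X : Type*} [TopologicalSpace X] [T2Space X]
    {C U : Set X} (hC : IsCompact C) (hU : IsOpen U) {x : X} (hx : x ∈ U) :
    ∃ N, IsCompact N ∧ N ∈ 𝓝[C] x ∧ N ⊆ U := by
  obtain ⟨V, W, hV, hW, hxV, hCW, hVW⟩ :=
    SeparatedNhds.of_isCompact_isCompact isCompact_singleton (hC.diff hU)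
      (Set.disjoint_singleton_left.2 fun hxCU => hxCU.2 hx)
  refine ⟨C \ W, hC.diff hW, ?_, fun y hy => by_contra fun hyU => hy.2 (hCW ⟨hy.1, hyU⟩)⟩
  filter_upwards [self_mem_nhdsWithin, mem_nhdsWithin_of_mem_nhds (hV.mem_nhds (hxV rfl))]
    with y hyC hyV
  exact ⟨hyC, hVW.notMem_of_mem_left hyV⟩

section OpenUpperSigmaAlgebra

variable {E : Type*} [TopologicalSpace E] [PartialOrder E]

variable (E) in
/-- The σ-algebra generated by the open increasing sets of an ordered topological space. It is the
domain on which measures are determined by their values on open increasing sets. -/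
abbrev openUpperMeasurableSpace : MeasurableSpace E :=
  MeasurableSpace.generateFrom {U | IsOpen U ∧ IsUpperSet U}

theorem measurableSet_openUpper_of_isClosed_of_isLowerSet {F : Set E} (hF : IsClosed F)
    (hlow : IsLowerSet F) : MeasurableSet[openUpperMeasurableSpace E] F := by
  let := openUpperMeasurableSpace E
  have hcompl : MeasurableSet Fᶜ :=
    MeasurableSpace.measurableSet_generateFrom ⟨hF.isOpen_compl, hlow.compl⟩
  exact hcompl.of_compl

theorem exists_measurableSet_openUpper_mem_nhdsWithin_of_not_le [OrderClosedTopology E]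
    {C : Set E} (hC : IsCompact C) {x y : E} (hxy : ¬y ≤ x) :
    ∃ T, MeasurableSet[openUpperMeasurableSpace E] T ∧ T ∈ 𝓝[C] x ∧ Tᶜ ∈ 𝓝 y := by
  obtain ⟨N, hN, hNx, hNy⟩ :=
    exists_isCompact_mem_nhdsWithin_subset hC (isClosed_Ici (a := y)).isOpen_compl hxy
  have hclosed := isClosed_lowerClosure_of_isCompact hN
  exact ⟨lowerClosure N,
    measurableSet_openUpper_of_isClosed_of_isLowerSet hclosed (lowerClosure N).lower,
    mem_of_superset hNx subset_lowerClosure,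
    hclosed.isOpen_compl.mem_nhds fun ⟨z, hz, hyz⟩ => hNy hz hyz⟩

theorem exists_measurableSet_openUpper_separating [OrderClosedTopology E] {C D : Set E}
    (hC : IsCompact C) (hD : IsCompact D) (hCD : Disjoint C D) :
    ∃ T, MeasurableSet[openUpperMeasurableSpace E] T ∧ C ⊆ T ∧ Disjoint T D := by
  let := openUpperMeasurableSpace E
  refine exists_measurableSet_separating_of_isCompact hC hD fun x hx y hy => ?_
  by_cases hyx : y ≤ x
  · have hxy : ¬x ≤ y := fun hxy => hCD.ne_of_mem hx hy (hxy.antisymm hyx)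
    obtain ⟨T, hT, hTy, hTx⟩ := exists_measurableSet_openUpper_mem_nhdsWithin_of_not_le hD hxy
    exact ⟨Tᶜ, hT.compl, mem_nhdsWithin_of_mem_nhds hTx, by rwa [compl_compl]⟩
  · obtain ⟨T, hT, hTx, hTy⟩ := exists_measurableSet_openUpper_mem_nhdsWithin_of_not_le hC hyx
    exact ⟨T, hT, hTx, mem_nhdsWithin_of_mem_nhds hTy⟩

end OpenUpperSigmaAlgebra

section InnerRegular

variable {E : Type*} [TopologicalSpace E] [MeasurableSpace E] [OpensMeasurableSpace E]

theorem measure_le_of_isCompact_separated [T2Space E] {μ ν : Measure E} [μ.InnerRegular]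
    [ν.InnerRegularCompactLTTop] [IsFiniteMeasure ν]
    (h : ∀ C D, IsCompact C → IsCompact D → Disjoint C D →
      ∃ T, C ⊆ T ∧ Disjoint T D ∧ μ T ≤ ν T) : μ ≤ ν := by
  refine Measure.le_iff.2 fun A hA => ?_
  rw [hA.measure_eq_iSup_isCompact μ]
  refine iSup₂_le fun C hCA => iSup_le fun hC => ENNReal.le_of_forall_pos_le_add fun ε hε _ => ?_
  obtain ⟨D, hDA, hD, hDε⟩ := hA.compl.exists_isCompact_sdiff_lt (measure_ne_top ν Aᶜ)
    (ENNReal.coe_ne_zero.2 hε.ne')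
  obtain ⟨T, hCT, hTD, hT⟩ := h C D hC hD (disjoint_compl_right.mono hCA hDA)
  have hTA : T ⊆ A ∪ Aᶜ \ D := fun x hx =>
    (em (x ∈ A)).imp_right fun hxA => ⟨hxA, hTD.notMem_of_mem_left hx⟩
  calc
    μ C ≤ μ T := measure_mono hCT
    _ ≤ ν T := hT
    _ ≤ ν A + ν (Aᶜ \ D) := (measure_mono hTA).trans (measure_union_le _ _)
    _ ≤ ν A + ε := by gcongr

theorem measure_le_of_isOpen_of_isUpperSet [Preorder E] [OrderClosedTopology E] {μ ν : Measure E}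
    [μ.InnerRegular] (h : ∀ F, IsClosed F → IsUpperSet F → μ F ≤ ν F) {U : Set E} (hU : IsOpen U)
    (hupper : IsUpperSet U) : μ U ≤ ν U := by
  rw [hU.measurableSet.measure_eq_iSup_isCompact μ]
  refine iSup₂_le fun K hKU => iSup_le fun hK => ?_
  calc
    μ K ≤ μ (upperClosure K) := measure_mono subset_upperClosure
    _ ≤ ν (upperClosure K) := h _ (isClosed_upperClosure_of_isCompact hK) (upperClosure K).upper
    _ ≤ ν U := measure_mono (upperClosure_min hKU hupper)

theorem measure_eq_of_forall_isOpen_isUpperSet [PartialOrder E] [OrderClosedTopology E]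
    {μ ν : Measure E} [IsFiniteMeasure μ] [μ.InnerRegular] [ν.InnerRegular]
    (h : ∀ U, IsOpen U → IsUpperSet U → μ U = ν U) : μ = ν := by
  have hmass : μ Set.univ = ν Set.univ := h Set.univ isOpen_univ isUpperSet_univ
  have : IsFiniteMeasure ν := ⟨hmass ▸ measure_lt_top μ Set.univ⟩
  have hgen : ∀ T, MeasurableSet[openUpperMeasurableSpace E] T → μ T = ν T := fun T hT =>
    ext_on_measurableSpace_of_generate_finite _ {U | IsOpen U ∧ IsUpperSet U}
      (fun U hU => h U hU.1 hU.2)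
      (MeasurableSpace.generateFrom_le fun U hU => hU.1.measurableSet) rfl
      (fun U hU V hV _ => ⟨hU.1.inter hV.1, hU.2.inter hV.2⟩) hmass hT
  refine le_antisymm (measure_le_of_isCompact_separated fun C D hC hD hCD => ?_)
    (measure_le_of_isCompact_separated fun C D hC hD hCD => ?_)
  all_goals obtain ⟨T, hT, hCT, hTD⟩ := exists_measurableSet_openUpper_separating hC hD hCD
  · exact ⟨T, hCT, hTD, (hgen T hT).le⟩
  · exact ⟨T, hCT, hTD, (hgen T hT).ge⟩

end InnerRegular

theorem le_liminf_measure_of_isOpen_of_tendsto {Ω ι : Type*} [TopologicalSpace Ω]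
    [MeasurableSpace Ω] [OpensMeasurableSpace Ω] [HasOuterApproxClosed Ω] {l : Filter ι}
    {μs : ι → FiniteMeasure Ω} {μ : FiniteMeasure Ω} (hμ : Tendsto μs l (𝓝 μ)) {U : Set Ω}
    (hU : IsOpen U) : (μ : Measure Ω) U ≤ l.liminf fun i => (μs i : Measure Ω) U := by
  refine le_of_forall_lt_imp_le_of_dense fun a ha => le_liminf_of_le (by isBoundedDefault) ?_
  have hcompl : (μ : Measure Ω) Uᶜ < (μ : Measure Ω) Set.univ - a := by
    rw [lt_tsub_iff_right, add_comm, ← measure_add_measure_compl hU.measurableSet]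
    exact ENNReal.add_lt_add_right (measure_ne_top _ _) ha
  obtain ⟨b, hUb, hb⟩ := exists_between hcompl
  have hmass : Tendsto (fun i => (μs i : Measure Ω) Set.univ) l (𝓝 ((μ : Measure Ω) Set.univ)) := by
    simpa only [FiniteMeasure.ennreal_mass] using ENNReal.tendsto_coe.2 hμ.mass
  have hlimsup := FiniteMeasure.limsup_measure_closed_le_of_tendsto hμ hU.isClosed_compl
  filter_upwards [hmass.eventually_const_lt (lt_tsub_iff_right.1 hb),
    eventually_lt_of_limsup_lt (hlimsup.trans_lt hUb)] with i hi_mass hi_compl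
  have hsum : a + b < (μs i : Measure Ω) U + b := calc
    a + b = b + a := add_comm a b
    _ < (μs i : Measure Ω) Set.univ := hi_mass
    _ = (μs i : Measure Ω) U + (μs i : Measure Ω) Uᶜ :=
      (measure_add_measure_compl hU.measurableSet).symm
    _ ≤ (μs i : Measure Ω) U + b := by gcongr
  exact (lt_of_add_lt_add_right hsum).le

theorem stmt6_general {E ι : Type*} [TopologicalSpace E] [HasOuterApproxClosed E]
    [MeasurableSpace E] [OpensMeasurableSpace E] [PartialOrder E] [OrderClosedTopology E]
    {l : Filter ι} (μs : ι → Measure E) [∀ i, IsFiniteMeasure (μs i)]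
    (πt π : Measure E) [IsFiniteMeasure πt] [πt.InnerRegular] [π.InnerRegular]
    (hweak : ∀ g : BoundedContinuousFunction E ℝ,
      Tendsto (fun i => ∫ x, g x ∂(μs i)) l (𝓝 (∫ x, g x ∂πt)))
    (hclosed : ∀ F, IsClosed F → IsUpperSet F → π F ≤ l.limsup fun i => μs i F)
    (hopen : ∀ U, IsOpen U → IsUpperSet U → l.liminf (fun i => μs i U) ≤ π U) :
    πt = π := by
  have hlim : Tendsto (β := FiniteMeasure E) (fun i => ⟨μs i, inferInstance⟩) l
      (𝓝 ⟨πt, inferInstance⟩) :=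
    FiniteMeasure.tendsto_iff_forall_integral_tendsto.2 hweak
  have hle_closed : ∀ F, IsClosed F → IsUpperSet F → π F ≤ πt F := fun F hF hupper =>
    (hclosed F hF hupper).trans (FiniteMeasure.limsup_measure_closed_le_of_tendsto hlim hF)
  refine measure_eq_of_forall_isOpen_isUpperSet fun U hU hupper => le_antisymm ?_ ?_
  · exact (le_liminf_measure_of_isOpen_of_tendsto hlim hU).trans (hopen U hU hupper)
  · exact measure_le_of_isOpen_of_isUpperSet hle_closed hU hupper

/-- Lemma 2.10: if `μₙ` converges weakly to `π̃` and `μₙ(I) → π(I)` for every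
Borel increasing set `I`, then `π̃ = π`. -/
theorem stmt6 {E : Type*} [MetricSpace E] [PolishSpace E] [MeasurableSpace E] [BorelSpace E]
    [PartialOrder E] [OrderClosedTopology E]
    (μs : ℕ → Measure E) [∀ n, IsProbabilityMeasure (μs n)]
    (πt π : Measure E) [IsProbabilityMeasure πt] [IsProbabilityMeasure π]
    (hweak : ∀ g : BoundedContinuousFunction E ℝ,
      Tendsto (fun n => ∫ x, g x ∂(μs n)) atTop (nhds (∫ x, g x ∂πt)))
    (hI : ∀ I : Set E, MeasurableSet I → IsUpperSet I →
      Tendsto (fun n => μs n I) atTop (nhds (π I))) :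
    πt = π :=
  stmt6_general μs πt π hweak (fun F hF hupper => (hI F hF.measurableSet hupper).limsup_eq.ge)
    fun U hU hupper => (hI U hU.measurableSet hupper).liminf_eq.le
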